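/- For every integer n ≥ 1, the total number of vertices over all subtrees of the comb C_n is R(C_n) = 3(n−2)·2^{n+1} + 4(n+3), where R(T) = Σ_S |S| with the sum ranging over all subtrees S of T. -/

import Mathlib

/-- A subtree of a graph: a nonempty set of vertices inducing a connected subgraph. -/
def IsSubtree {V : Type*} (G : SimpleGraph V) (S : Finset V) : Prop :=
  S.Nonempty ∧ (G.induce (S : Set V)).Connected

/-- `R(T) = Σ_S |S|`: the total number of vertices over all subtrees. -/
noncomputable def totalSubtreeOrder {V : Type*} [Fintype V] (G : SimpleGraph V) : ℕ :=
  ∑ S ∈ (Set.toFinite {S : Finset V | IsSubtree G S}).toFinset, S.card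

/-- The comb `C_n`: a path with `n` vertices (the `Sum.inl` vertices), with one pendant
leaf (the corresponding `Sum.inr` vertex) attached to each path vertex. -/
def comb (n : ℕ) : SimpleGraph (Fin n ⊕ Fin n) :=
  SimpleGraph.fromRel fun a b => match a, b with
    | Sum.inl i, Sum.inl j => (i : ℕ) + 1 = (j : ℕ)
    | Sum.inl i, Sum.inr j => i = j
    | _, _ => False

/-!
The comb is the corona `P ∘ K₁` of a path `P`. A subtree of a corona `G ∘ K₁` is either a single
leaf or consists of a subtree `A` of `G` together with an arbitrary set of leaves at vertices of
`A`. There are `2 ^ |A|` choices of such a leaf set, with `|A| / 2` leaves on average, so `A`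
contributes `(3 / 2) |A| 2 ^ |A|`. The subtrees of a path are its nonempty intervals, and summing
this contribution by right endpoint and length leaves two arithmetico-geometric sums.
-/

open Finset SimpleGraph

section Subtrees

variable {V : Type*} [Finite V] {G : SimpleGraph V}

/-- The finite set of all subtrees of `G`, over which `totalSubtreeOrder G` is summed. -/
noncomputable def subtrees (G : SimpleGraph V) : Finset (Finset V) :=
  (Set.toFinite {S : Finset V | IsSubtree G S}).toFinset

theorem mem_subtrees {S : Finset V} : S ∈ subtrees G ↔ IsSubtree G S :=
  Set.Finite.mem_toFinset _

end Subtrees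

theorem isSubtree_singleton {V : Type*} (G : SimpleGraph V) (v : V) : IsSubtree G {v} := by
  refine ⟨singleton_nonempty v, ?_⟩
  rw [coe_singleton]
  exact Connected.of_subsingleton

theorem preconnected_of_surjective_of_adj_imp {V W : Type*} {G : SimpleGraph V} {H : SimpleGraph W}
    (hG : G.Preconnected) {f : V → W} (hf : f.Surjective)
    (hadj : ∀ ⦃u v⦄, G.Adj u v → f u = f v ∨ H.Adj (f u) (f v)) : H.Preconnected := by
  refine hf.forall₂.2 fun u v => ?_
  rw [reachable_iff_reflTransGen]
  refine Relation.ReflTransGen.lift' f (fun x y hxy => ?_) _ _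
    ((reachable_iff_reflTransGen u v).1 (hG u v))
  rcases hadj hxy with heq | hH
  · rw [Function.onFun, heq]
  · exact .single hH

section Corona

variable {V : Type*} {G : SimpleGraph V}

/-- The corona `G ∘ K₁`, obtained from `G` (on the `Sum.inl` vertices) by attaching to each vertex
`v` one pendant leaf `Sum.inr v`. The comb is the corona of a path. -/
def corona (G : SimpleGraph V) : SimpleGraph (V ⊕ V) where
  Adj
    | .inl u, .inl v => G.Adj u v
    | .inl u, .inr v => u = v
    | .inr u, .inl v => u = v
    | .inr _, .inr _ => False
  symm := ⟨by rintro (u | u) (v | v) h <;> first | exact h.symm | exact h⟩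
  loopless := ⟨by rintro (v | v) h <;> first | exact G.loopless.irrefl v h | exact h⟩

theorem corona_adj_inl_inl {u v : V} : (corona G).Adj (.inl u) (.inl v) ↔ G.Adj u v :=
  Iff.rfl

theorem corona_adj_inl_inr {u v : V} : (corona G).Adj (.inl u) (.inr v) ↔ u = v :=
  Iff.rfl

theorem corona_adj_inr_left {u : V} {x : V ⊕ V} : (corona G).Adj (.inr u) x ↔ x = .inl u := by
  rcases x with v | v
  · exact eq_comm.trans Sum.inl_injective.eq_iff.symm
  · exact iff_of_false id Sum.inr_ne_inl

theorem toRight_subset_toLeft_of_isSubtree_corona {S : Finset (V ⊕ V)}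
    (hS : IsSubtree (corona G) S) (hleaf : ∀ v, S ≠ {.inr v}) : S.toRight ⊆ S.toLeft := by
  intro v hv
  rw [mem_toRight] at hv
  rw [mem_toLeft]
  have : Nontrivial (S : Set (V ⊕ V)) :=
    Set.nontrivial_coe_sort.2 (nontrivial_iff_ne_singleton hv |>.2 (hleaf v))
  obtain ⟨⟨x, hx⟩, hadj⟩ := hS.2.preconnected.exists_adj_of_nontrivial ⟨.inr v, hv⟩
  exact corona_adj_inr_left.1 hadj ▸ hx

theorem IsSubtree.of_corona_disjSum {A B : Finset V} (hBA : B ⊆ A)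
    (h : IsSubtree (corona G) (A.disjSum B)) : IsSubtree G A := by
  obtain ⟨⟨x, hx⟩, hconn⟩ := h
  have stem_mem : ∀ y ∈ A.disjSum B, Sum.elim id id y ∈ A := by
    rintro (v | v) hv
    · exact inl_mem_disjSum.1 hv
    · exact hBA (inr_mem_disjSum.1 hv)
  let stem (y : (A.disjSum B : Set (V ⊕ V))) : (A : Set V) := ⟨Sum.elim id id y.1, stem_mem _ y.2⟩
  have stem_surjective : stem.Surjective := fun ⟨v, hv⟩ => ⟨⟨.inl v, inl_mem_disjSum.2 hv⟩, rfl⟩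
  have : Nonempty (A : Set V) := ⟨stem ⟨x, hx⟩⟩
  refine ⟨⟨_, stem_mem x hx⟩, ⟨preconnected_of_surjective_of_adj_imp hconn.preconnected
    stem_surjective ?_⟩⟩
  rintro ⟨u | u, hu⟩ ⟨v | v, hv⟩ hadj
  · exact .inr hadj
  · exact .inl (Subtype.ext hadj)
  · exact .inl (Subtype.ext hadj)
  · exact hadj.elim

theorem IsSubtree.corona_disjSum {A B : Finset V} (hA : IsSubtree G A) (hBA : B ⊆ A) :
    IsSubtree (corona G) (A.disjSum B) := by
  obtain ⟨⟨a, ha⟩, hconn⟩ := hA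
  let stemHom : G.induce (A : Set V) →g (corona G).induce (A.disjSum B : Set (V ⊕ V)) :=
    { toFun v := ⟨.inl v.1, inl_mem_disjSum.2 v.2⟩
      map_rel' hadj := hadj }
  have stem_reachable (v : (A : Set V)) := (hconn.preconnected ⟨a, ha⟩ v).map stemHom
  refine ⟨⟨.inl a, inl_mem_disjSum.2 ha⟩, (connected_iff_exists_forall_reachable _).2
    ⟨stemHom ⟨a, ha⟩, ?_⟩⟩
  rintro ⟨v | v, hv⟩
  · exact stem_reachable ⟨v, inl_mem_disjSum.1 hv⟩
  · have leaf_adj : ((corona G).induce (A.disjSum B : Set (V ⊕ V))).Adj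
        (stemHom ⟨v, hBA (inr_mem_disjSum.1 hv)⟩) ⟨.inr v, hv⟩ := corona_adj_inl_inr (G := G).2 rfl
    exact (stem_reachable _).trans leaf_adj.reachable

theorem isSubtree_corona_iff {S : Finset (V ⊕ V)} :
    IsSubtree (corona G) S ↔
      (∃ v, S = {.inr v}) ∨ IsSubtree G S.toLeft ∧ S.toRight ⊆ S.toLeft := by
  constructor
  · intro hS
    refine or_iff_not_imp_left.2 fun hleaf => ?_
    have hsub := toRight_subset_toLeft_of_isSubtree_corona hS (not_exists.1 hleaf)
    rw [← S.toLeft_disjSum_toRight] at hS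
    exact ⟨hS.of_corona_disjSum hsub, hsub⟩
  · rintro (⟨v, rfl⟩ | ⟨hS, hsub⟩)
    · exact isSubtree_singleton _ _
    · rw [← S.toLeft_disjSum_toRight]
      exact hS.corona_disjSum hsub

theorem sum_subtrees_corona [Fintype V] {M : Type*} [AddCommMonoid M] (f : Finset (V ⊕ V) → M) :
    ∑ S ∈ subtrees (corona G), f S =
      ∑ v, f {.inr v} + ∑ A ∈ subtrees G, ∑ B ∈ A.powerset, f (A.disjSum B) := by
  classical
  have toLeft_leaf (v : V) : ({.inr v} : Finset (V ⊕ V)).toLeft = ∅ := by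
    simp [eq_empty_iff_forall_notMem]
  rw [← sum_filter_add_sum_filter_not (subtrees (corona G)) (·.toLeft = ∅), sum_sigma']
  congr 1
  · symm
    refine sum_nbij (fun v => {.inr v}) ?_ ?_ ?_ fun _ _ => rfl
    · intro v _
      exact mem_filter.2 ⟨mem_subtrees.2 (isSubtree_singleton _ _), toLeft_leaf v⟩
    · exact (singleton_injective.comp Sum.inr_injective).injOn
    · intro S hS
      obtain ⟨hS, hleft⟩ := mem_filter.1 hS
      rcases isSubtree_corona_iff.1 (mem_subtrees.1 hS) with ⟨v, rfl⟩ | ⟨hleft', -⟩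
      · exact ⟨v, mem_coe.2 (mem_univ v), rfl⟩
      · exact (hleft'.1.ne_empty hleft).elim
  · refine sum_nbij' (fun S => ⟨S.toLeft, S.toRight⟩) (fun p => p.1.disjSum p.2) ?_ ?_ ?_ ?_ ?_
    · intro S hS
      obtain ⟨hS, hleft⟩ := mem_filter.1 hS
      rcases isSubtree_corona_iff.1 (mem_subtrees.1 hS) with ⟨v, rfl⟩ | ⟨hleft', hsub⟩
      · exact (hleft (toLeft_leaf v)).elim
      · exact mem_sigma.2 ⟨mem_subtrees.2 hleft', mem_powerset.2 hsub⟩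
    · rintro ⟨A, B⟩ hAB
      obtain ⟨hA, hBA⟩ := mem_sigma.1 hAB
      rw [mem_subtrees] at hA
      refine mem_filter.2 ⟨mem_subtrees.2 (hA.corona_disjSum (mem_powerset.1 hBA)), ?_⟩
      rw [toLeft_disjSum]
      exact hA.1.ne_empty
    · exact fun S _ => toLeft_disjSum_toRight
    · exact fun p _ => by rw [toLeft_disjSum, toRight_disjSum]
    · exact fun S _ => by rw [toLeft_disjSum_toRight]

theorem sum_powerset_card {α : Type*} (s : Finset α) :
    ∑ B ∈ s.powerset, #B = #s * 2 ^ (#s - 1) := by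
  rw [← Nat.sum_range_mul_choose, sum_powerset_apply_card fun k => k]
  simp only [smul_eq_mul, mul_comm]

theorem sum_powerset_card_disjSum {α : Type*} (s : Finset α) :
    ∑ B ∈ s.powerset, #(s.disjSum B) = 3 * #s * 2 ^ (#s - 1) := by
  simp only [card_disjSum, sum_add_distrib, sum_const, card_powerset, smul_eq_mul,
    sum_powerset_card]
  rcases #s with _ | k
  · rfl
  · rw [Nat.add_sub_cancel, pow_succ]
    ring

theorem totalSubtreeOrder_corona [Fintype V] (G : SimpleGraph V) :
    totalSubtreeOrder (corona G) =
      Fintype.card V + ∑ A ∈ subtrees G, 3 * #A * 2 ^ (#A - 1) := by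
  refine (sum_subtrees_corona card).trans ?_
  simp only [card_singleton, sum_const, card_univ, smul_eq_mul, mul_one, sum_powerset_card_disjSum]

end Corona

section Hasse

variable {α : Type*} [LinearOrder α]

theorem ordConnected_of_preconnected_induce_hasse {s : Set α}
    (h : ((hasse α).induce s).Preconnected) : s.OrdConnected := by
  refine ⟨fun a ha c hc b ⟨hab, hbc⟩ => ?_⟩
  by_contra hb
  have hab : a < b := hab.lt_of_ne (ne_of_mem_of_not_mem ha hb)
  obtain ⟨w⟩ := h ⟨a, ha⟩ ⟨c, hc⟩
  obtain ⟨d, -, hx, hy⟩ := w.exists_boundary_dart {x | x.1 < b} hab hbc.not_gt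
  have hby : b < d.snd.1 := (not_lt.1 hy).lt_of_ne (ne_of_mem_of_not_mem d.snd.2 hb).symm
  rcases d.adj with hxy | hyx
  · exact hxy.2 hx hby
  · exact (hyx.lt.trans hx).not_gt hby

theorem preconnected_induce_hasse_of_ordConnected [SuccOrder α] [IsSuccArchimedean α]
    (s : Set α) [hs : s.OrdConnected] : ((hasse α).induce s).Preconnected := by
  refine (hasse_preconnected_of_succ s).mono fun x y hxy => ?_
  have hrange : (Set.range (OrderEmbedding.subtype (· ∈ s))).OrdConnected := by
    rw [OrderEmbedding.coe_subtype, Subtype.range_coe]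
    exact hs
  exact hxy.imp (·.image _ hrange) (·.image _ hrange)

theorem exists_eq_Icc_of_ordConnected [LocallyFiniteOrder α] {S : Finset α} (hne : S.Nonempty)
    (hS : (S : Set α).OrdConnected) : ∃ a b, a ≤ b ∧ S = Icc a b := by
  refine ⟨S.min' hne, S.max' hne, S.min'_le_max' hne, Subset.antisymm ?_ ?_⟩
  · exact fun x hx => mem_Icc.2 ⟨S.min'_le x hx, S.le_max' x hx⟩
  · rw [← coe_subset, coe_Icc]
    exact hS.out (S.min'_mem hne) (S.max'_mem hne)

theorem isSubtree_hasse_iff [LocallyFiniteOrder α] {S : Finset α} :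
    IsSubtree (hasse α) S ↔ ∃ a b, a ≤ b ∧ S = Icc a b := by
  constructor
  · rintro ⟨hne, hconn⟩
    exact exists_eq_Icc_of_ordConnected hne
      (ordConnected_of_preconnected_induce_hasse hconn.preconnected)
  · rintro ⟨a, b, hab, rfl⟩
    let := LinearLocallyFiniteOrder.succOrder α
    rw [IsSubtree, coe_Icc, connected_iff]
    exact ⟨nonempty_Icc.2 hab, preconnected_induce_hasse_of_ordConnected _,
      (Set.nonempty_Icc.2 hab).to_subtype⟩

theorem sum_subtrees_hasse [Fintype α] [LocallyFiniteOrder α] [LocallyFiniteOrderBot α]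
    {M : Type*} [AddCommMonoid M] (f : Finset α → M) :
    ∑ S ∈ subtrees (hasse α), f S = ∑ b, ∑ a ∈ Iic b, f (Icc a b) := by
  rw [sum_sigma']
  symm
  refine sum_nbij (fun p => Icc p.2 p.1) ?_ ?_ ?_ fun _ _ => rfl
  · rintro ⟨b, a⟩ hab
    exact mem_subtrees.2 (isSubtree_hasse_iff.2 ⟨a, b, mem_Iic.1 (mem_sigma.1 hab).2, rfl⟩)
  · rintro ⟨b, a⟩ hab ⟨d, c⟩ - heq
    have hab : a ≤ b := mem_Iic.1 (mem_sigma.1 hab).2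
    rw [← coe_inj, coe_Icc, coe_Icc, Set.Icc_eq_Icc_iff hab] at heq
    rw [heq.1, heq.2]
  · intro S hS
    obtain ⟨a, b, hab, rfl⟩ := isSubtree_hasse_iff.1 (mem_subtrees.1 hS)
    exact ⟨⟨b, a⟩, mem_sigma.2 ⟨mem_univ b, mem_Iic.2 hab⟩, rfl⟩

end Hasse

theorem sum_subtrees_pathGraph_apply_card {M : Type*} [AddCommMonoid M] (n : ℕ) (g : ℕ → M) :
    ∑ S ∈ subtrees (pathGraph n), g #S = ∑ m ∈ range n, ∑ k ∈ range (m + 1), g (k + 1) := by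
  refine (sum_subtrees_hasse fun S => g #S).trans ?_
  rw [← Fin.sum_univ_eq_sum_range fun m => ∑ k ∈ range (m + 1), g (k + 1)]
  refine Fintype.sum_congr _ _ fun b => ?_
  calc ∑ a ∈ Iic b, g #(Icc a b) = ∑ a ∈ range (b + 1), g (b + 1 - a) := by
        simp only [Fin.card_Icc, Nat.range_succ_eq_Iic, ← Fin.map_valEmbedding_Iic, sum_map,
          Fin.valEmbedding_apply]
    _ = ∑ k ∈ range (b + 1), g (k + 1) := by
        rw [← sum_flip]
        refine sum_congr rfl fun k hk => congrArg g ?_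
        rw [mem_range] at hk
        omega

theorem comb_eq_corona_pathGraph (n : ℕ) : comb n = corona (pathGraph n) := by
  ext (i | i) (j | j)
  · rw [corona_adj_inl_inl, pathGraph_adj]
    simp only [comb, fromRel_adj, ne_eq, Sum.inl.injEq, Fin.ext_iff]
    omega
  · simp [comb, corona_adj_inl_inr]
  · simp [comb, corona_adj_inr_left, eq_comm]
  · simp [comb, corona_adj_inr_left]

theorem sum_range_add_one_mul_two_pow (m : ℕ) :
    ∑ k ∈ range (m + 1), (k + 1) * 2 ^ k = m * 2 ^ (m + 1) + 1 := by
  induction m with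
  | zero => rfl
  | succ m ih =>
    rw [sum_range_succ, ih]
    ring

theorem sum_range_mul_two_pow_add_one {R : Type*} [CommRing R] (n : ℕ) :
    ∑ m ∈ range n, (m : R) * 2 ^ (m + 1) = (n - 2) * 2 ^ (n + 1) + 4 := by
  induction n with
  | zero => norm_num
  | succ n ih =>
    rw [sum_range_succ, ih]
    push_cast
    ring

theorem totalSubtreeOrder_comb (n : ℕ) :
    totalSubtreeOrder (comb n) = n + ∑ m ∈ range n, 3 * (m * 2 ^ (m + 1) + 1) := by
  rw [comb_eq_corona_pathGraph, totalSubtreeOrder_corona, Fintype.card_fin,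
    sum_subtrees_pathGraph_apply_card n fun k => 3 * k * 2 ^ (k - 1)]
  simp only [Nat.add_sub_cancel, mul_assoc, ← mul_sum, sum_range_add_one_mul_two_pow]

theorem stmt17 (n : ℕ) (hn : 1 ≤ n) :
    (totalSubtreeOrder (comb n) : ℤ) =
      3 * ((n : ℤ) - 2) * 2 ^ (n + 1) + 4 * ((n : ℤ) + 3) := by
  rw [totalSubtreeOrder_comb]
  push_cast
  rw [← mul_sum, sum_add_distrib, sum_range_mul_two_pow_add_one, sum_const, card_range, nsmul_one]
  ring
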